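/- arXiv:2108.07713 — 2 statements merged into one kernel-verified Lean document; each statement's English description precedes it below -/
import Mathlib

section
/- A positive integer k is a sum of three integer squares if and only if the square-free part of k is not congruent to 7 modulo 8. -/
theorem exists_round (a f : ℤ) (ha : 0 < a) : ∃ t : ℤ, -a ≤ 2 * (f + a * t) ∧ 2 * (f + a * t) ≤ a := by
  refine ⟨-((2 * f + a) / (2 * a)), ?_⟩
  have h1 := Int.emod_nonneg (2 * f + a) (show 2 * a ≠ 0 by omega)
  have h2 := Int.emod_lt_of_pos (2 * f + a) (show 0 < 2 * a by omega)
  have h3 := Int.emod_add_mul_ediv (2 * f + a) (2 * a)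
  constructor <;> nlinarith

theorem binary_red (N : ℕ) : ∀ A B C D : ℤ, A.toNat = N → 0 < A → A * C - B ^ 2 = D → 0 < D →
    ∃ p q r s : ℤ, p * s - q * r = 1 ∧
      3 * (A * p ^ 2 + 2 * B * p * r + C * r ^ 2) ^ 2 ≤ 4 * D := by
  induction N using Nat.strong_induction_on with
  | _ N ih =>
    intro A B C D hN hA hD hD0
    obtain ⟨t, ht1, ht2⟩ := exists_round A B hA
    obtain ⟨B', hB'⟩ : ∃ B', B' = B + A * t := ⟨_, rfl⟩
    obtain ⟨C', hC'⟩ : ∃ C', C' = C + 2 * B * t + A * t ^ 2 := ⟨_, rfl⟩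
    have hD' : A * C' - B' ^ 2 = D := by rw [← hD, hB', hC']; ring
    rw [← hB'] at ht1 ht2
    have hsq : 4 * B' ^ 2 ≤ A ^ 2 := by nlinarith
    by_cases hc : A ≤ C'
    · refine ⟨1, 0, 0, 1, by ring, ?_⟩
      have : A * A ≤ A * C' := by nlinarith
      nlinarith
    · have hC0 : 0 < C' := by
        by_contra h
        have : A * C' ≤ 0 := by nlinarith
        nlinarith [sq_nonneg B']
      obtain ⟨p, q, r, s, h1, h2⟩ := ih C'.toNat (by omega) C' (-B') A D rfl hC0 (by rw [← hD']; ring) hD0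
      refine ⟨-r + t * p, -s + t * q, p, q, by linarith, ?_⟩
      have e : A * (-r + t * p) ^ 2 + 2 * B * (-r + t * p) * p + C * p ^ 2 =
        C' * p ^ 2 + 2 * (-B') * p * r + A * r ^ 2 := by rw [hB', hC']; ring
      rw [e]; exact h2

theorem final_bound (a A : ℤ) (ha : 0 < a) (h2 : 3 * a ^ 2 ≤ 4 * A) (hred : 3 * A ^ 2 ≤ 4 * a) :
    a = 1 := by
  by_contra hne
  have h0 : 2 ≤ a := by omega
  have h3 : 3 * a ≤ 2 * A := by nlinarith
  have h4 : (3 * a) ^ 2 ≤ (2 * A) ^ 2 := pow_le_pow_left₀ (by omega) h3 2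
  nlinarith

theorem ternary_red (N : ℕ) : ∀ a b c d e f : ℤ, a.toNat = N → 0 < a → 0 < a * b - f ^ 2 →
    a * b * c + 2 * d * e * f - a * d ^ 2 - b * e ^ 2 - c * f ^ 2 = 1 →
    ∀ x y z : ℤ, ∃ u v w : ℤ,
      a * x ^ 2 + b * y ^ 2 + c * z ^ 2 + 2 * d * y * z + 2 * e * x * z + 2 * f * x * y
        = u ^ 2 + v ^ 2 + w ^ 2 := by
  induction N using Nat.strong_induction_on with
  | _ N ih =>
    intro a b c d e f hN ha hA hdet x y z
    obtain ⟨p, q, r, s, hps, hred⟩ := binary_red (a * b - f ^ 2).toNat (a * b - f ^ 2) (a * d - e * f)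
      (a * c - e ^ 2) a rfl hA (by linear_combination a * hdet) ha
    obtain ⟨t, ht1, ht2⟩ := exists_round a (f * p + e * r) ha
    obtain ⟨f', hf'⟩ : ∃ f', f' = f * p + e * r + a * t := ⟨_, rfl⟩
    obtain ⟨e', he'⟩ : ∃ e', e' = f * q + e * s := ⟨_, rfl⟩
    obtain ⟨b', hb'⟩ : ∃ b', b' = b * p ^ 2 + 2 * d * p * r + c * r ^ 2
      + 2 * (f * p + e * r) * t + a * t ^ 2 := ⟨_, rfl⟩
    obtain ⟨c', hc'⟩ : ∃ c', c' = b * q ^ 2 + 2 * d * q * s + c * s ^ 2 := ⟨_, rfl⟩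
    obtain ⟨d', hd'⟩ : ∃ d', d' = b * p * q + d * (p * s + q * r) + c * r * s + t * e' := ⟨_, rfl⟩
    rw [← hf'] at ht1 ht2
    have hA' : (a * b - f ^ 2) * p ^ 2 + 2 * (a * d - e * f) * p * r + (a * c - e ^ 2) * r ^ 2
      = a * b' - f' ^ 2 := by rw [hb', hf']; ring
    rw [hA'] at hred
    have hdet' : a * b' * c' + 2 * d' * e' * f' - a * d' ^ 2 - b' * e' ^ 2 - c' * f' ^ 2 = 1 := by
      have : a * b' * c' + 2 * d' * e' * f' - a * d' ^ 2 - b' * e' ^ 2 - c' * f' ^ 2 =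
        (a * b * c + 2 * d * e * f - a * d ^ 2 - b * e ^ 2 - c * f ^ 2) * (p * s - q * r) ^ 2 := by
        rw [hb', hc', hd', he', hf']; ring
      rw [this, hdet, hps]; norm_num
    have hApos : 0 < a * b' - f' ^ 2 := by
      rw [← hA']
      by_contra hneg
      push Not at hneg
      have h4 : (a * b - f ^ 2) * ((a * b - f ^ 2) * p ^ 2 + 2 * (a * d - e * f) * p * r + (a * c - e ^ 2) * r ^ 2)
        = ((a * b - f ^ 2) * p + (a * d - e * f) * r) ^ 2 + a * r ^ 2 := by
        linear_combination (a * r ^ 2) * hdet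
      have h5 : ((a * b - f ^ 2) * p + (a * d - e * f) * r) ^ 2 + a * r ^ 2 ≤ 0 := by
        rw [← h4]; exact mul_nonpos_of_nonneg_of_nonpos hA.le hneg
      have h6 : r = 0 := by
        by_contra hr
        have : 0 < r ^ 2 := by positivity
        nlinarith [sq_nonneg ((a * b - f ^ 2) * p + (a * d - e * f) * r)]
      subst h6
      have hp : p ≠ 0 := by rintro rfl; simp at hps
      have : 0 < p ^ 2 := by positivity
      nlinarith
    obtain ⟨y', hy'⟩ : ∃ y', y' = s * y - q * z := ⟨_, rfl⟩
    obtain ⟨z', hz'⟩ : ∃ z', z' = p * z - r * y := ⟨_, rfl⟩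
    obtain ⟨x', hx'⟩ : ∃ x', x' = x - t * y' := ⟨_, rfl⟩
    have hy : y = p * y' + q * z' := by rw [hy', hz']; linear_combination -y * hps
    have hz : z = r * y' + s * z' := by rw [hy', hz']; linear_combination -z * hps
    have hx : x = x' + t * y' := by rw [hx']; ring
    have hval : a * x ^ 2 + b * y ^ 2 + c * z ^ 2 + 2 * d * y * z + 2 * e * x * z + 2 * f * x * y
      = a * x' ^ 2 + b' * y' ^ 2 + c' * z' ^ 2 + 2 * d' * y' * z' + 2 * e' * x' * z' + 2 * f' * x' * y' := by
      rw [hx, hy, hz, hb', hc', hd', he', hf']; ring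
    rw [hval]
    clear hval hx hy hz hx' hy' hz' hA' hb' hc' hd' he' hf' hdet hA
    have hsq : 4 * f' ^ 2 ≤ a ^ 2 := by nlinarith
    by_cases hba : b' < a
    · have hb0 : 0 < b' := by
        by_contra h
        have : a * b' ≤ 0 := by nlinarith
        nlinarith [sq_nonneg f']
      obtain ⟨u, v, w, h⟩ := ih b'.toNat (by omega) b' a c' e' d' f' rfl hb0 (by linarith)
        (by linarith) y' x' z'
      exact ⟨u, v, w, by rw [← h]; ring⟩
    · push Not at hba
      have h1 : a * a ≤ a * b' := by nlinarith
      obtain ⟨A, hAdef⟩ : ∃ A, A = a * b' - f' ^ 2 := ⟨_, rfl⟩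
      rw [← hAdef] at hred hApos
      have h2 : 3 * a ^ 2 ≤ 4 * A := by nlinarith
      have ha1 : a = 1 := by
        exact final_bound a A ha h2 hred
      subst ha1
      have hf0 : f' = 0 := by omega
      have hA1 : A = 1 := by nlinarith
      subst hf0
      have hb1 : b' = 1 := by linarith
      subst hb1
      refine ⟨x' + e' * z', y' + d' * z', z', ?_⟩
      linear_combination z' ^ 2 * hdet'

theorem key (n d t g : ℤ) (hd : 0 < d) (hn : 0 < d * n - 1) (h : t ^ 2 + d = g * (d * n - 1)) :
    ∃ x y z : ℤ, n = x ^ 2 + y ^ 2 + z ^ 2 := by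
  have hg : 0 < g := by
    by_contra hg
    nlinarith [sq_nonneg t]
  obtain ⟨u, v, w, h⟩ := ternary_red g.toNat g (d * n - 1) n 0 1 t rfl hg (by linarith)
    (by linear_combination (-n) * h) 0 0 1
  exact ⟨u, v, w, by linarith⟩

theorem no_seven (s : ℤ) (hs : s % 8 = 7) (m : ℕ) : 0 < m → ∀ x y z : ℤ, s * (m : ℤ) ^ 2 ≠ x ^ 2 + y ^ 2 + z ^ 2 := by
  induction m using Nat.strong_induction_on with
  | _ m ih =>
    intro hm x y z h
    have sq8 : ∀ x : ℤ, (x % 2 = 0 ∧ (x ^ 2 % 8 = 0 ∨ x ^ 2 % 8 = 4)) ∨ (x % 2 = 1 ∧ x ^ 2 % 8 = 1) := by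
      intro x
      have : x % 8 = 0 ∨ x % 8 = 1 ∨ x % 8 = 2 ∨ x % 8 = 3 ∨ x % 8 = 4 ∨ x % 8 = 5 ∨ x % 8 = 6 ∨ x % 8 = 7 := by omega
      rcases this with h | h | h | h | h | h | h | h <;> simp [pow_two, Int.mul_emod, h] <;> omega
    have hmul : (s * (m : ℤ) ^ 2) % 8 = (7 * ((m : ℤ) ^ 2 % 8)) % 8 := by
      rw [Int.mul_emod, hs]
    rw [h] at hmul
    have hx := sq8 x
    have hy := sq8 y
    have hz := sq8 z
    have hm' := sq8 m
    have hall : x % 2 = 0 ∧ y % 2 = 0 ∧ z % 2 = 0 ∧ (m : ℤ) % 2 = 0 := by omega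
    obtain ⟨h1, h2, h3, h4⟩ := hall
    obtain ⟨x', rfl⟩ : ∃ x', x = 2 * x' := ⟨x / 2, by omega⟩
    obtain ⟨y', rfl⟩ : ∃ x', y = 2 * x' := ⟨y / 2, by omega⟩
    obtain ⟨z', rfl⟩ : ∃ x', z = 2 * x' := ⟨z / 2, by omega⟩
    obtain ⟨m', rfl⟩ : ∃ x', m = 2 * x' := ⟨m / 2, by omega⟩
    apply ih m' (by omega) (by omega) x' y' z'
    push_cast at h
    linarith

open scoped NumberTheorySymbols

theorem sq_of_jac (p d : ℕ) (hp : p.Prime) (h : J((p : ℤ) | d) = 1)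
    (hmod : (p % 4 = 1 ∧ d % 2 = 1) ∨ (p % 4 = 3 ∧ d % 4 = 3)) :
    ∃ t g : ℤ, t ^ 2 + d = g * p := by
  have : Fact p.Prime := ⟨hp⟩
  have hpo : Odd p := Nat.odd_iff.mpr (by omega)
  have hdo : Odd d := Nat.odd_iff.mpr (by omega)
  have hJ : J(-(d : ℤ) | p) = 1 := by
    rw [neg_eq_neg_one_mul, jacobiSym.mul_left, jacobiSym.at_neg_one hpo]
    rcases hmod with ⟨h1, h2⟩ | ⟨h1, h2⟩
    · rw [ZMod.χ₄_nat_one_mod_four h1, ← jacobiSym.quadratic_reciprocity_one_mod_four h1 hdo, h]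
      norm_num
    · rw [ZMod.χ₄_nat_three_mod_four h1, jacobiSym.quadratic_reciprocity_three_mod_four h2 h1, h]
      norm_num
  obtain ⟨r, hr⟩ := ZMod.isSquare_of_jacobiSym_eq_one hJ
  obtain ⟨t, rfl⟩ := ZMod.intCast_surjective r
  have h0 : ((t ^ 2 + d : ℤ) : ZMod p) = 0 := by
    push_cast at hr ⊢
    rw [pow_two, ← hr]; ring
  obtain ⟨g, hg⟩ := (ZMod.intCast_zmod_eq_zero_iff_dvd _ _).mp h0
  exact ⟨t, g, by rw [hg]; ring⟩

theorem three_of_two_mod_four (n : ℕ) (hn : n % 4 = 2) :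
    ∃ x y z : ℤ, (n : ℤ) = x ^ 2 + y ^ 2 + z ^ 2 := by
  have hcop : (n - 1).Coprime (4 * n) := by
    have h1 : (n - 1).Coprime n := by
      have := Nat.coprime_self_add_right (m := n - 1) (n := 1)
      rw [show n - 1 + 1 = n by omega] at this
      simpa using this
    have h2 : (n - 1).Coprime 4 :=
      Nat.Coprime.pow_right 2 (Nat.coprime_two_right.mpr (Nat.odd_iff.mpr (by omega)))
    exact h2.mul_right h1
  obtain ⟨p, hgt, hp, hmod⟩ := Nat.forall_exists_prime_gt_and_modEq (n - 1) (by omega) hcop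
  obtain ⟨j, hj⟩ := (Nat.modEq_iff_dvd' hgt.le).mp hmod.symm
  have hpe : (p : ℤ) = (4 * j + 1) * n - 1 := by
    zify [hgt.le, show 1 ≤ n by omega] at hj
    linarith
  have hp4 : p % 4 = 1 := by
    have : p = n - 1 + 4 * (n * j) := by rw [← mul_assoc, ← hj]; omega
    omega
  have hJ : J((p : ℤ) | 4 * j + 1) = 1 := by
    rw [jacobiSym.mod_left' (a₂ := -1), jacobiSym.at_neg_one (Nat.odd_iff.mpr (by omega)),
      ZMod.χ₄_nat_one_mod_four (by omega)]
    rw [hpe]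
    push_cast
    rw [sub_eq_add_neg, Int.add_comm, Int.add_mul_emod_self_left]
  obtain ⟨t, g, h⟩ := sq_of_jac p (4 * j + 1) hp hJ (by omega)
  refine key n ((4 * j + 1 : ℕ) : ℤ) t g (by positivity) ?_ ?_
  · have := hp.pos
    push_cast
    rw [← hpe]; exact_mod_cast this
  · rw [h, hpe]; push_cast; ring

theorem three_of_odd (n c : ℕ) (hn : 1 < n)
    (hc : (n % 8 = 1 ∧ c = 3) ∨ (n % 8 = 3 ∧ c = 1) ∨ (n % 8 = 5 ∧ c = 3)) :
    ∃ x y z : ℤ, (n : ℤ) = x ^ 2 + y ^ 2 + z ^ 2 := by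
  obtain ⟨r, hr⟩ : ∃ r, c * n = 2 * r + 1 :=
    ⟨(c * n) / 2, by rcases hc with ⟨h, rfl⟩ | ⟨h, rfl⟩ | ⟨h, rfl⟩ <;> omega⟩
  have hr4 : (r % 4 = 1) ∨ (r % 4 = 3 ∧ c = 3) := by
    rcases hc with ⟨h, rfl⟩ | ⟨h, rfl⟩ | ⟨h, rfl⟩ <;> omega
  have hcop : r.Coprime (4 * n) := by
    have h1 : r.Coprime n := by
      have h3 : r.Coprime (c * n) := by rw [hr]; simp
      exact h3.coprime_mul_left_right
    have h2 : r.Coprime 4 :=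
      Nat.Coprime.pow_right 2 (Nat.coprime_two_right.mpr (Nat.odd_iff.mpr (by omega)))
    exact h2.mul_right h1
  obtain ⟨p, hgt, hp, hmod⟩ := Nat.forall_exists_prime_gt_and_modEq r (by omega) hcop
  obtain ⟨j, hj⟩ := (Nat.modEq_iff_dvd' hgt.le).mp hmod.symm
  have hpe : 2 * (p : ℤ) = (8 * j + c) * n - 1 := by
    zify [hgt.le] at hj hr
    linarith
  have hp4 : p % 4 = r % 4 := by
    have : p = r + 4 * (n * j) := by rw [← mul_assoc, ← hj]; omega
    omega
  have hodd : Odd (8 * j + c) := Nat.odd_iff.mpr (by omega)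
  have hJ2 : J(2 | 8 * j + c) * J((p : ℤ) | 8 * j + c) = J(-1 | 8 * j + c) := by
    rw [← jacobiSym.mul_left]
    apply jacobiSym.mod_left'
    rw [hpe]
    push_cast
    rw [sub_eq_add_neg, Int.add_comm, Int.add_mul_emod_self_left]
  have hJ : J((p : ℤ) | 8 * j + c) = 1 := by
    rw [jacobiSym.at_two hodd, jacobiSym.at_neg_one hodd, ZMod.χ₈_nat_eq_if_mod_eight,
      ZMod.χ₄_nat_eq_if_mod_four] at hJ2
    have hc' : c = 1 ∨ c = 3 := by omega
    rcases hc' with rfl | rfl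
    · rw [if_neg (by omega), if_pos (by omega), if_neg (by omega), if_pos (by omega)] at hJ2
      linarith
    · rw [if_neg (by omega), if_neg (by omega), if_neg (by omega), if_neg (by omega)] at hJ2
      linarith
  obtain ⟨t, g, h⟩ := sq_of_jac p (8 * j + c) hp hJ (by omega)
  have hppos := hp.pos
  obtain ⟨t', g', h'⟩ : ∃ t' g' : ℤ, t' ^ 2 + (8 * j + c : ℕ) = g' * (2 * p) := by
    have hpo : (p : ℤ) % 2 = 1 := by omega
    have hdo : ((8 * j + c : ℕ) : ℤ) % 2 = 1 := by omega
    have main : ∀ t g : ℤ, t % 2 = 1 → t ^ 2 + (8 * j + c : ℕ) = g * p →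
        ∃ t' g' : ℤ, t' ^ 2 + (8 * j + c : ℕ) = g' * (2 * p) := by
      intro t g ht h
      have ht2 : t ^ 2 % 2 = 1 := by simp [pow_two, Int.mul_emod, ht]
      have hg : (g * p) % 2 = g % 2 := by
        rw [Int.mul_emod, hpo]; simp
      have : g % 2 = 0 := by omega
      refine ⟨t, g / 2, ?_⟩
      rw [h]
      have h2 : g = 2 * (g / 2) := by omega
      nth_rewrite 1 [h2]
      ring
    rcases Int.emod_two_eq_zero_or_one t with ht | ht
    · exact main (t + p) (g + 2 * t + p) (by omega) (by rw [add_mul, add_mul, ← h]; ring)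
    · exact main t g ht h
  refine key n ((8 * j + c : ℕ) : ℤ) t' g' (by omega) ?_ ?_
  · push_cast
    rw [← hpe]; omega
  · rw [h', hpe]; push_cast; ring

/-- A positive integer `k` is a sum of three integer squares iff the square-free
part of `k` is not congruent to `7` modulo `8`. -/
theorem stmt_6 (k : ℕ) (hk : 0 < k) :
    (∃ x y z : ℤ, (k : ℤ) = x ^ 2 + y ^ 2 + z ^ 2) ↔
      (∀ s m : ℕ, Squarefree s → k = s * m ^ 2 → s % 8 ≠ 7) := by
  constructor
  · rintro ⟨x, y, z, h⟩ s m - rfl h7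
    have hm : 0 < m := by
      rcases Nat.eq_zero_or_pos m with rfl | h
      · simp at hk
      · exact h
    exact no_seven s (by omega) m hm x y z (by push_cast at h; exact h)
  · intro h
    obtain ⟨s, m, hsm, hs⟩ := Nat.sq_mul_squarefree k
    have h7 := h s m hs (by rw [← hsm]; ring)
    have h4 : s % 4 ≠ 0 := by
      intro h4
      have := hs 2 (by omega)
      simp at this
    have hrep : ∃ x y z : ℤ, (s : ℤ) = x ^ 2 + y ^ 2 + z ^ 2 := by
      by_cases h1 : s = 1
      · exact ⟨1, 0, 0, by simp [h1]⟩
      have : s % 4 = 2 ∨ s % 8 = 1 ∨ s % 8 = 3 ∨ s % 8 = 5 := by omega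
      rcases this with h | h | h | h
      · exact three_of_two_mod_four s h
      · exact three_of_odd s 3 (by omega) (by omega)
      · exact three_of_odd s 1 (by omega) (by omega)
      · exact three_of_odd s 3 (by omega) (by omega)
    obtain ⟨x, y, z, hxyz⟩ := hrep
    refine ⟨m * x, m * y, m * z, ?_⟩
    rw [← hsm]
    push_cast
    rw [hxyz]; ring
end

section
/- For all positive integers r and m, the equation r(4m-1)/(8m) + 2rm·x² + y² + z² + w² = r has a solution in rational numbers x, y, z, w. -/
open NumberTheorySymbols in
lemma aux_legendre (n b : ℕ) (hn : 0 < n) (hb : 0 < b) (hbs : ¬ IsSquare b) (h1 : n ∣ b + 1)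
    (β : ℤ) (hβ : (b : ℤ) ∣ β ^ 2 - n) :
    ∃ w v u : ℤ, u ≠ 0 ∧ (n : ℤ) * u ^ 2 = w ^ 2 + b * v ^ 2 := by
  haveI : NeZero n := ⟨hn.ne'⟩
  haveI : NeZero b := ⟨hb.ne'⟩
  have hcop : IsCoprime (n : ℤ) (b : ℤ) := by
    obtain ⟨c, hc⟩ := h1
    refine ⟨c, -1, ?_⟩
    have : (b : ℤ) + 1 = n * c := by exact_mod_cast hc
    linarith
  let f : Fin (Nat.sqrt (n * b) + 1) × Fin (Nat.sqrt n + 1) × Fin (Nat.sqrt b + 1) →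
      ZMod n × ZMod b := fun t =>
    (((t.1.val : ℤ) - (t.2.1.val : ℤ) : ℤ), ((t.1.val : ℤ) - β * (t.2.2.val : ℤ) : ℤ))
  have hcard : Fintype.card (ZMod n × ZMod b) <
      Fintype.card (Fin (Nat.sqrt (n * b) + 1) × Fin (Nat.sqrt n + 1) × Fin (Nat.sqrt b + 1)) := by
    simp only [Fintype.card_prod, ZMod.card, Fintype.card_fin]
    have e1 := Nat.lt_succ_sqrt (n * b)
    have e2 := Nat.lt_succ_sqrt n
    have e3 := Nat.lt_succ_sqrt b
    simp only [Nat.succ_eq_add_one] at e1 e2 e3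
    generalize Nat.sqrt (n * b) + 1 = A at *
    generalize Nat.sqrt n + 1 = B at *
    generalize Nat.sqrt b + 1 = C at *
    have e4 : n * b < (B * B) * (C * C) := Nat.mul_lt_mul'' e2 e3
    have e5 : (n * b) * (n * b) < (A * A) * ((B * B) * (C * C)) := Nat.mul_lt_mul'' e1 e4
    by_contra hcon
    push Not at hcon
    have := Nat.mul_le_mul hcon hcon
    nlinarith
  obtain ⟨s, t, hst, hf⟩ := Fintype.exists_ne_map_eq_of_card_lt f hcard
  obtain ⟨w1, v1, u1⟩ := s
  obtain ⟨w2, v2, u2⟩ := t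
  simp only [f, Prod.mk.injEq] at hf
  obtain ⟨hf1, hf2⟩ := hf
  rw [ZMod.intCast_eq_intCast_iff_dvd_sub] at hf1 hf2
  have key : ∀ (k : ℕ) (a c : Fin (Nat.sqrt k + 1)), ((a.val : ℤ) - c.val) ^ 2 ≤ k := by
    intro k a c
    have ha : (a.val : ℤ) ≤ Nat.sqrt k := by exact_mod_cast Nat.lt_succ_iff.mp a.2
    have hc : (c.val : ℤ) ≤ Nat.sqrt k := by exact_mod_cast Nat.lt_succ_iff.mp c.2
    have hk : (Nat.sqrt k : ℤ) ^ 2 ≤ k := by exact_mod_cast Nat.sqrt_le' k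
    have ha0 : (0 : ℤ) ≤ a.val := by positivity
    have hc0 : (0 : ℤ) ≤ c.val := by positivity
    refine le_trans ?_ hk
    apply sq_le_sq'  <;> linarith
  have kw := key _ w2 w1
  have kv := key _ v2 v1
  have ku := key _ u2 u1
  have hne : ¬ ((w2.val : ℤ) - w1.val = 0 ∧ (v2.val : ℤ) - v1.val = 0 ∧
      (u2.val : ℤ) - u1.val = 0) := by
    rintro ⟨a1, a2, a3⟩
    apply hst
    simp only [Prod.mk.injEq, Fin.ext_iff]
    omega
  have hf1' : (n : ℤ) ∣ ((w2.val : ℤ) - w1.val) - ((v2.val : ℤ) - v1.val) := by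
    convert hf1 using 1; ring
  have hf2' : (b : ℤ) ∣ ((w2.val : ℤ) - w1.val) - β * ((u2.val : ℤ) - u1.val) := by
    convert hf2 using 1; ring
  generalize (w2.val : ℤ) - w1.val = w at *
  generalize (v2.val : ℤ) - v1.val = v at *
  generalize (u2.val : ℤ) - u1.val = u at *
  clear hf1 hf2 key hst hcard
  have hbz : (0 : ℤ) < b := by exact_mod_cast hb
  have hnz : (0 : ℤ) < n := by exact_mod_cast hn
  have hbs' : ∀ x : ℤ, x ^ 2 ≠ b := by
    intro x hx
    apply hbs
    refine ⟨x.natAbs, ?_⟩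
    zify
    rw [← hx, ← sq, sq_abs]
  have d1 : (n : ℤ) ∣ w ^ 2 + b * v ^ 2 - n * u ^ 2 := by
    have h1' : (n : ℤ) ∣ b + 1 := by exact_mod_cast h1
    have : w ^ 2 + b * v ^ 2 - n * u ^ 2 = (w - v) * (w + v) + (b + 1) * v ^ 2 - n * u ^ 2 := by ring
    rw [this]
    exact dvd_sub (dvd_add (hf1'.mul_right _) (h1'.mul_right _)) (dvd_mul_right _ _)
  have d2 : (b : ℤ) ∣ w ^ 2 + b * v ^ 2 - n * u ^ 2 := by
    have : w ^ 2 + b * v ^ 2 - n * u ^ 2 =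
      (w - β * u) * (w + β * u) + (β ^ 2 - n) * u ^ 2 + b * v ^ 2 := by ring
    rw [this]
    exact dvd_add (dvd_add (hf2'.mul_right _) (hβ.mul_right _)) (dvd_mul_right _ _)
  obtain ⟨c, hc⟩ := hcop.mul_dvd d1 d2
  push_cast at kw
  have hnb : (0 : ℤ) < n * b := by positivity
  have bv : (b : ℤ) * v ^ 2 ≤ n * b := by nlinarith
  have nu : (n : ℤ) * u ^ 2 ≤ n * b := by nlinarith
  have bv0 : 0 ≤ (b : ℤ) * v ^ 2 := by positivity
  have nu0 : 0 ≤ (n : ℤ) * u ^ 2 := by positivity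
  have w0 : 0 ≤ w ^ 2 := by positivity
  have c1 : -1 < c := by
    by_contra hcon
    have : (n * b : ℤ) * c ≤ (n * b) * (-1) := by
      apply mul_le_mul_of_nonneg_left _ hnb.le; omega
    have : (n : ℤ) * u ^ 2 = n * b := by linarith
    exact hbs' u (mul_left_cancel₀ hnz.ne' this)
  have c2 : c < 2 := by
    by_contra hcon
    have : (n * b : ℤ) * 2 ≤ (n * b) * c := by
      apply mul_le_mul_of_nonneg_left _ hnb.le; omega
    have q1 : w ^ 2 = n * b := by linarith
    have q2 : (b : ℤ) * v ^ 2 = b * n := by linarith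
    have q3 : v ^ 2 = n := mul_left_cancel₀ hbz.ne' q2
    have : v ^ 2 ∣ w ^ 2 := ⟨b, by rw [q1, q3]⟩
    obtain ⟨x, hx⟩ := (Int.pow_dvd_pow_iff (by norm_num)).mp this
    apply hbs' x
    apply mul_left_cancel₀ hnz.ne'
    rw [← q1, hx, ← q3]; ring
  obtain rfl | rfl : c = 0 ∨ c = 1 := by omega
  · refine ⟨w, v, u, ?_, by linarith⟩
    rintro rfl
    have z1 : w ^ 2 = 0 := by nlinarith
    have z2 : (b : ℤ) * v ^ 2 = 0 := by nlinarith
    apply hne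
    refine ⟨by simpa using z1, ?_, rfl⟩
    rcases mul_eq_zero.mp z2 with h | h
    · omega
    · simpa using h
  · refine ⟨w * u - b * v, w + u * v, u ^ 2 + b, by positivity, ?_⟩
    have : (n : ℤ) * (u ^ 2 + b) = w ^ 2 + b * v ^ 2 := by linarith
    calc (n : ℤ) * (u ^ 2 + b) ^ 2 = (n * (u ^ 2 + b)) * (u ^ 2 + b) := by ring
      _ = _ := by rw [this]; ring

/-- Sum of three rational squares. -/
def S3 (q : ℚ) : Prop := ∃ y z w : ℚ, q = y ^ 2 + z ^ 2 + w ^ 2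

lemma S3.of_sq {q k : ℚ} (h : S3 q) : S3 (k ^ 2 * q) := by
  obtain ⟨y, z, w, rfl⟩ := h
  exact ⟨k * y, k * z, k * w, by ring⟩

lemma aux_s3 (n b : ℕ) (hn : 0 < n) (hb : 0 < b) (hbs : ¬ IsSquare b) (h1 : n ∣ b + 1)
    (β : ℤ) (hβ : (b : ℤ) ∣ β ^ 2 - n) (c d : ℕ) (hcd : c ^ 2 + d ^ 2 = b) : S3 n := by
  obtain ⟨w, v, u, hu, h⟩ := aux_legendre n b hn hb hbs h1 β hβ
  have hu' : (u : ℚ) ≠ 0 := by exact_mod_cast hu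
  refine ⟨w / u, c * v / u, d * v / u, ?_⟩
  have h' : (n : ℚ) * u ^ 2 = w ^ 2 + b * v ^ 2 := by exact_mod_cast h
  have hcd' : (c : ℚ) ^ 2 + d ^ 2 = b := by exact_mod_cast hcd
  rw [← hcd'] at h'
  field_simp
  linarith

lemma aux_prime (n e k : ℕ) (hn : Odd n) (he : Odd e) (hk : k.Coprime n) :
    ∃ p : ℕ, p.Prime ∧ p ≡ e [MOD 8] ∧ p ≡ k [MOD n] := by
  have h8 : Nat.Coprime 8 n := by
    have : Nat.Coprime (2 ^ 3) n := Nat.Coprime.pow_left 3 (Nat.coprime_two_left.mpr hn)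
    simpa using this
  obtain ⟨x, hx1, hx2⟩ := Nat.chineseRemainder h8 e k
  have c1 : x.Coprime 8 := by
    have : Nat.Coprime x (2 ^ 3) := by
      apply Nat.Coprime.pow_right
      rw [Nat.coprime_two_right, Nat.odd_iff]
      have := hx1
      unfold Nat.ModEq at this
      have := Nat.odd_iff.mp he
      omega
    simpa using this
  have c2 : x.Coprime n := by
    unfold Nat.Coprime
    rw [hx2.gcd_eq]; exact hk
  obtain ⟨p, -, hp, hpx⟩ := Nat.forall_exists_prime_gt_and_modEq 0
    (q := 8 * n) (a := x) (by have := hn.pos; omega) (Nat.Coprime.mul_right c1 c2)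
  exact ⟨p, hp, (hpx.of_mul_right _).trans hx1, (hpx.of_mul_left _).trans hx2⟩

lemma aux_pred_cop (n : ℕ) (hn : 0 < n) : (n - 1).Coprime n := by
  obtain ⟨k, rfl⟩ : ∃ k, n = k + 1 := ⟨n - 1, by omega⟩
  simp

lemma aux_sq (p n : ℕ) [Fact p.Prime] (h : jacobiSym n p = 1) :
    ∃ β : ℤ, (p : ℤ) ∣ β ^ 2 - n := by
  obtain ⟨y, hy⟩ := ZMod.isSquare_of_jacobiSym_eq_one h
  obtain ⟨β, rfl⟩ := ZMod.intCast_surjective y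
  refine ⟨β, ?_⟩
  rw [← ZMod.intCast_zmod_eq_zero_iff_dvd] <;> try infer_instance
  push_cast at hy ⊢
  rw [hy]; ring

lemma aux_jac (p n : ℕ) (c : ℤ) (h : n ∣ p + 1) : jacobiSym p n = jacobiSym (-1) n := by
  apply jacobiSym.mod_left'
  apply Int.ModEq.symm
  rw [Int.modEq_iff_dvd]
  have : (n : ℤ) ∣ p + 1 := by exact_mod_cast h
  simpa using this

lemma aux_dvd (p n : ℕ) (hn : 0 < n) (h : p ≡ n - 1 [MOD n]) : n ∣ p + 1 := by
  have := h.add_right 1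
  rw [Nat.sub_add_cancel hn] at this
  exact (Nat.modEq_zero_iff_dvd).mp (this.trans (by simp [Nat.ModEq]))

lemma three_sq (n : ℕ) (h4 : n % 4 ≠ 0) (h8 : n % 8 ≠ 7) : S3 n := by
  have hn : 0 < n := by omega
  have hcases : n % 4 = 1 ∨ n % 8 = 3 ∨ n % 4 = 2 := by omega
  rcases hcases with h | h | h
  · have ho : Odd n := by rw [Nat.odd_iff]; omega
    obtain ⟨p, hp, hp8, hpn⟩ := aux_prime n 1 (n - 1) ho (by decide) (aux_pred_cop n hn)
    haveI : Fact p.Prime := ⟨hp⟩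
    unfold Nat.ModEq at hp8
    have hd := aux_dvd p n hn hpn
    have hj : jacobiSym n p = 1 := by
      rw [jacobiSym.quadratic_reciprocity_one_mod_four' ho (by omega), aux_jac p n 0 hd,
        jacobiSym.at_neg_one ho, ZMod.χ₄_nat_one_mod_four h]
    obtain ⟨β, hβ⟩ := aux_sq p n hj
    obtain ⟨c, d, hcd⟩ := Nat.Prime.sq_add_sq (p := p) (by omega)
    exact aux_s3 n p hn hp.pos (Irreducible.not_isSquare hp) hd β hβ c d hcd
  · have ho : Odd n := by rw [Nat.odd_iff]; omega
    have hk : ((n - 1) / 2).Coprime n :=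
      Nat.Coprime.coprime_dvd_left ⟨2, by omega⟩ (aux_pred_cop n hn)
    obtain ⟨p, hp, hp8, hpn⟩ := aux_prime n 1 ((n - 1) / 2) ho (by decide) hk
    haveI : Fact p.Prime := ⟨hp⟩
    unfold Nat.ModEq at hp8
    have hd : n ∣ 2 * p + 1 := by
      apply aux_dvd _ _ hn
      have := hpn.mul_left 2
      rwa [show 2 * ((n - 1) / 2) = n - 1 by omega] at this
    have hj : jacobiSym n p = 1 := by
      rw [jacobiSym.quadratic_reciprocity_one_mod_four' ho (by omega)]
      have := aux_jac (2 * p) n 0 hd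
      push_cast at this
      rw [jacobiSym.mul_left, jacobiSym.at_neg_one ho, ZMod.χ₄_nat_three_mod_four (by omega),
        jacobiSym.at_two ho, ZMod.χ₈_nat_eq_if_mod_eight, if_neg (by omega), if_neg (by omega)]
        at this
      linarith
    obtain ⟨β, hβ⟩ := aux_sq p n hj
    obtain ⟨γ, hγ⟩ : ∃ γ : ℤ, ((2 * p : ℕ) : ℤ) ∣ γ ^ 2 - n := by
      have hcop : IsCoprime (2 : ℤ) (p : ℤ) := by
        refine ⟨-(p / 2 : ℤ), 1, ?_⟩
        omega
      push_cast
      rcases Int.even_or_odd' β with ⟨k, hk | hk⟩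
      · refine ⟨β + p, hcop.mul_dvd ?_ ?_⟩
        · rw [← even_iff_two_dvd]
          have e1 : Odd (p : ℤ) := by rw [Int.odd_iff]; omega
          have e2 : Even β := ⟨k, by omega⟩
          have e3 : Odd (n : ℤ) := by exact_mod_cast ho
          exact ((e2.add_odd e1).pow).sub_odd e3
        · have : (β + p) ^ 2 - (n : ℤ) = (β ^ 2 - n) + p * (2 * β + p) := by ring
          rw [this]
          exact dvd_add hβ (dvd_mul_right _ _)
      · refine ⟨β, hcop.mul_dvd ?_ hβ⟩
        rw [← even_iff_two_dvd]
        have e2 : Odd β := ⟨k, hk⟩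
        have e3 : Odd (n : ℤ) := by exact_mod_cast ho
        exact e2.pow.sub_odd e3
    obtain ⟨c, d, hcd⟩ := Nat.Prime.sq_add_sq (p := p) (by omega)
    have hns : ¬ IsSquare (2 * p) := by
      rintro ⟨x, hx⟩
      have h2 : (2 * p) % 4 = 2 := by omega
      rw [hx, Nat.mul_mod] at h2
      have : x % 4 < 4 := Nat.mod_lt _ (by norm_num)
      interval_cases x % 4 <;> omega
    rcases le_total c d with hle | hle
    · obtain ⟨e, rfl⟩ := Nat.exists_eq_add_of_le hle
      exact aux_s3 n (2 * p) hn (by have := hp.pos; omega) hns hd γ hγ (c + (c + e)) e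
        (by rw [← hcd]; ring)
    · obtain ⟨e, rfl⟩ := Nat.exists_eq_add_of_le hle
      exact aux_s3 n (2 * p) hn (by have := hp.pos; omega) hns hd γ hγ (d + (d + e)) e
        (by rw [← hcd]; ring)
  · obtain ⟨k, rfl⟩ : ∃ k, n = 2 * k := ⟨n / 2, by omega⟩
    have ho : Odd k := by rw [Nat.odd_iff]; omega
    have hk : 0 < k := ho.pos
    have main : ∀ e : ℕ, Odd e → e % 4 = 1 → e < 8 →
        ZMod.χ₈ (e : ZMod 8) * ZMod.χ₄ (k : ZMod 4) = 1 → S3 (2 * k : ℕ) := by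
      intro e heo he4 he8 hχ
      obtain ⟨p, hp, hp8, hpn⟩ := aux_prime k e (k - 1) ho heo (aux_pred_cop k hk)
      haveI : Fact p.Prime := ⟨hp⟩
      have hpe : (p : ZMod 8) = e := (ZMod.natCast_eq_natCast_iff _ _ _).mpr hp8
      unfold Nat.ModEq at hp8
      have hd := aux_dvd p k hk hpn
      have hd2 : 2 * k ∣ p + 1 :=
        Nat.Coprime.mul_dvd_of_dvd_of_dvd (Nat.coprime_two_left.mpr ho) (by omega) hd
      have hpo : Odd p := by rw [Nat.odd_iff]; omega
      have hj : jacobiSym (2 * k : ℕ) p = 1 := by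
        push_cast
        rw [jacobiSym.mul_left, jacobiSym.at_two hpo,
          jacobiSym.quadratic_reciprocity_one_mod_four' ho (by omega), aux_jac p k 0 hd,
          jacobiSym.at_neg_one ho, hpe, hχ]
      obtain ⟨β, hβ⟩ := aux_sq p (2 * k) hj
      obtain ⟨c, d, hcd⟩ := Nat.Prime.sq_add_sq (p := p) (by omega)
      exact aux_s3 (2 * k) p hn hp.pos (Irreducible.not_isSquare hp) hd2 β hβ c d hcd
    rcases (by omega : k % 4 = 1 ∨ k % 4 = 3) with h' | h'
    · apply main 1 (by decide) (by norm_num) (by norm_num)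
      rw [ZMod.χ₄_nat_one_mod_four h']; decide
    · apply main 5 (by decide) (by norm_num) (by norm_num)
      rw [ZMod.χ₄_nat_three_mod_four h']; decide

lemma aux_four (n : ℕ) (hn : 0 < n) : ∃ a k : ℕ, n = 4 ^ a * k ∧ k % 4 ≠ 0 := by
  obtain ⟨a, k, hk, h⟩ := Nat.exists_eq_pow_mul_and_not_dvd hn.ne' 4 (by norm_num)
  exact ⟨a, k, h, by omega⟩

lemma aux_main (r m : ℕ) (hr : 0 < r) (hm : 0 < m) :
    ∃ X : ℚ, S3 (2 * r * m * (4 * m + 1 - X ^ 2)) := by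
  obtain ⟨a, r', hra, hr'⟩ := aux_four r hr
  have hrq : (r : ℚ) = (2 ^ a) ^ 2 * r' := by
    rw [hra]; push_cast; rw [← pow_mul, mul_comm a 2, pow_mul]; norm_num
  by_cases hodd : r' % 2 = 1
  · refine ⟨1, ?_⟩
    have := (three_sq (2 * r') (by omega) (by omega)).of_sq (k := 2 ^ a * 2 * m)
    convert this using 1
    rw [hrq]; push_cast; ring
  obtain ⟨s, rfl⟩ : ∃ s, r' = 2 * s := ⟨r' / 2, by omega⟩
  by_cases hs : s % 8 = 7
  swap
  · refine ⟨1, ?_⟩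
    have := (three_sq s (by omega) hs).of_sq (k := 2 ^ a * 4 * m)
    convert this using 1
    rw [hrq]; push_cast; ring
  obtain ⟨c, k, hmc, hk⟩ := aux_four m hm
  have hmq : (m : ℚ) = (2 ^ c) ^ 2 * k := by
    rw [hmc]; push_cast; rw [← pow_mul, mul_comm c 2, pow_mul]; norm_num
  -- the two substitutions
  have X0 : S3 ((s * k * (4 * m + 1) : ℕ)) →
      ∃ X : ℚ, S3 (2 * r * m * (4 * m + 1 - X ^ 2)) := by
    intro h
    refine ⟨0, ?_⟩
    have := h.of_sq (k := 2 ^ a * 2 * 2 ^ c)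
    convert this using 1
    push_cast
    rw [hrq]; push_cast
    linear_combination ((2 ^ a) ^ 2 * 4 * s * (4 * m + 1)) * hmq
  have X3 : 2 ≤ m → S3 ((s * k * (m - 2) : ℕ)) →
      ∃ X : ℚ, S3 (2 * r * m * (4 * m + 1 - X ^ 2)) := by
    intro h2 h
    refine ⟨3, ?_⟩
    have := h.of_sq (k := 2 ^ a * 4 * 2 ^ c)
    convert this using 1
    push_cast [Nat.cast_sub h2]
    rw [hrq]; push_cast
    linear_combination ((2 ^ a) ^ 2 * 16 * s * (m - 2)) * hmq
  have four : ∀ x y z : ℕ, (x * y * z) % 8 = ((x % 8) * (y % 8) * (z % 8)) % 8 := by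
    intro x y z; simp [Nat.mul_mod]
  by_cases hk2 : k % 4 = 2
  · have f := four s k (4 * m + 1)
    have h1 : (4 * m + 1) % 8 = 1 ∨ (4 * m + 1) % 8 = 5 := by omega
    have h2 : k % 8 = 2 ∨ k % 8 = 6 := by omega
    apply X0
    rcases h1 with h1 | h1 <;> rcases h2 with h2 | h2 <;> rw [hs, h1, h2] at f <;>
      exact three_sq _ (by omega) (by omega)
  rcases Nat.eq_zero_or_pos c with rfl | hc
  · have hmk : m = k := by simpa using hmc
    by_cases h5 : m % 8 = 5
    · have f := four s k (m - 2)
      rw [hs, ← hmk, h5, show (m - 2) % 8 = 3 by omega] at f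
      apply X3 (by omega)
      rw [← hmk]
      exact three_sq _ (by omega) (by omega)
    · have f := four s k (4 * m + 1)
      rw [hs, show (4 * m + 1) % 8 = 5 by omega] at f
      apply X0
      have h2 : k % 8 = 1 ∨ k % 8 = 3 ∨ k % 8 = 7 := by omega
      rcases h2 with h2 | h2 | h2 <;> rw [h2] at f <;>
        exact three_sq _ (by omega) (by omega)
  · obtain ⟨c, rfl⟩ : ∃ c', c = c' + 1 := ⟨c - 1, by omega⟩
    have hm4 : m % 4 = 0 := by
      rw [hmc, pow_succ, mul_comm (4 ^ c) 4, mul_assoc]; exact Nat.mul_mod_right _ _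
    have f := four s k (m - 2)
    apply X3 (by omega)
    have h1 : (m - 2) % 8 = 2 ∨ (m - 2) % 8 = 6 := by omega
    have h2 : k % 8 = 1 ∨ k % 8 = 3 ∨ k % 8 = 5 ∨ k % 8 = 7 := by omega
    rcases h1 with h1 | h1 <;> rcases h2 with h2 | h2 | h2 | h2 <;> rw [hs, h1, h2] at f <;>
      exact three_sq _ (by omega) (by omega)

/-- For all positive integers `r, m`, the equation
`r(4m-1)/(8m) + 2rm x² + y² + z² + w² = r` has a rational solution. -/
theorem stmt_8 (r m : ℕ) (hr : 0 < r) (hm : 0 < m) :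
    ∃ x y z w : ℚ,
      (r : ℚ) * (4 * m - 1) / (8 * m) + 2 * r * m * x ^ 2 + y ^ 2 + z ^ 2 + w ^ 2 = r := by
  obtain ⟨X, Y, Z, W, h⟩ := aux_main r m hr hm
  have hm' : (m : ℚ) ≠ 0 := by exact_mod_cast hm.ne'
  refine ⟨X / (4 * m), Y / (4 * m), Z / (4 * m), W / (4 * m), ?_⟩
  field_simp
  linear_combination (-8 : ℚ) * h
end
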